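/- Let A : ℝ^N → ℝ^m be linear and v ∈ ker A with v ≠ 0. Suppose φ : ℝ^m → ℝ^N satisfies ‖φ(0)‖ ≤ ε (for instance, φ approximates to accuracy ε an optimal reconstruction map for a set containing 0 whose optimality constant is 0). Then every ψ : ℝ^m → ℝ^N whose worst-case error on {0, v} is at most ‖v‖/2 (i.e. every optimal map for the problem obtained after adding the data point (v, 0)) satisfies sup_{y ∈ ℝ^m} ‖φ(y) − ψ(y)‖ ≥ ‖v‖/2 − ε. In particular, if ‖v‖ = 3/4 and ε < 11/40, then sup_{y} ‖φ(y) − ψ(y)‖ > 10^{-1}. -/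

import Mathlib

open scoped ENNReal

/-- Worst-case (ℓ²) reconstruction error of `φ` on the set `M₁` for the forward map `A`. -/
noncomputable def worstError {N m : ℕ}
    (A : EuclideanSpace ℝ (Fin N) →ₗ[ℝ] EuclideanSpace ℝ (Fin m))
    (M₁ : Set (EuclideanSpace ℝ (Fin N)))
    (φ : EuclideanSpace ℝ (Fin m) → EuclideanSpace ℝ (Fin N)) : ℝ≥0∞ :=
  ⨆ x : M₁, (‖φ (A (x : EuclideanSpace ℝ (Fin N))) - (x : EuclideanSpace ℝ (Fin N))‖₊ : ℝ≥0∞)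

/-- Optimality constant of the pair `(A, M₁)`: the infimum of the worst-case error
over all reconstruction maps. -/
noncomputable def optConst {N m : ℕ}
    (A : EuclideanSpace ℝ (Fin N) →ₗ[ℝ] EuclideanSpace ℝ (Fin m))
    (M₁ : Set (EuclideanSpace ℝ (Fin N))) : ℝ≥0∞ :=
  ⨅ φ : EuclideanSpace ℝ (Fin m) → EuclideanSpace ℝ (Fin N), worstError A M₁ φ

/-!
Since `A v = A 0`, a map `φ` that is accurate at `0` errs by at least `‖v‖ - ‖φ 0‖` at `v`, whereas
`ψ` errs there by at most `‖v‖ / 2`. The worst-case error is 1-Lipschitz in the reconstruction map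
for the uniform distance, so `φ` and `ψ` are at least the difference of these errors apart.
-/

section WorstError

variable {N m : ℕ} (A : EuclideanSpace ℝ (Fin N) →ₗ[ℝ] EuclideanSpace ℝ (Fin m))
  {M₁ : Set (EuclideanSpace ℝ (Fin N))} {x : EuclideanSpace ℝ (Fin N)}

theorem enorm_sub_le_worstError (hx : x ∈ M₁)
    (φ : EuclideanSpace ℝ (Fin m) → EuclideanSpace ℝ (Fin N)) :
    ‖φ (A x) - x‖ₑ ≤ worstError A M₁ φ :=
  le_iSup (fun z : M₁ ↦ ‖φ (A z) - (z : EuclideanSpace ℝ (Fin N))‖ₑ) ⟨x, hx⟩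

theorem worstError_le_iSup_enorm_sub_add_worstError (M₁ : Set (EuclideanSpace ℝ (Fin N)))
    (φ ψ : EuclideanSpace ℝ (Fin m) → EuclideanSpace ℝ (Fin N)) :
    worstError A M₁ φ ≤ (⨆ y, ‖φ y - ψ y‖ₑ) + worstError A M₁ ψ := by
  refine iSup_le fun ⟨x, hx⟩ ↦ ?_
  calc ‖φ (A x) - x‖ₑ = ‖(φ (A x) - ψ (A x)) + (ψ (A x) - x)‖ₑ := by rw [sub_add_sub_cancel]
    _ ≤ ‖φ (A x) - ψ (A x)‖ₑ + ‖ψ (A x) - x‖ₑ := enorm_add_le _ _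
    _ ≤ (⨆ y, ‖φ y - ψ y‖ₑ) + worstError A M₁ ψ :=
      add_le_add (le_iSup (fun y ↦ ‖φ y - ψ y‖ₑ) (A x)) (enorm_sub_le_worstError A hx ψ)

theorem ofReal_norm_sub_norm_le_worstError (hx : x ∈ M₁)
    (φ : EuclideanSpace ℝ (Fin m) → EuclideanSpace ℝ (Fin N)) :
    ENNReal.ofReal (‖x‖ - ‖φ (A x)‖) ≤ worstError A M₁ φ :=
  calc ENNReal.ofReal (‖x‖ - ‖φ (A x)‖) ≤ ENNReal.ofReal ‖φ (A x) - x‖ :=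
        ENNReal.ofReal_le_ofReal (norm_sub_rev x (φ (A x)) ▸ norm_sub_norm_le x (φ (A x)))
    _ = ‖φ (A x) - x‖ₑ := ofReal_norm _
    _ ≤ worstError A M₁ φ := enorm_sub_le_worstError A hx φ

theorem stmt_15_general {v : EuclideanSpace ℝ (Fin N)} (hv : v ∈ LinearMap.ker A) (hvM : v ∈ M₁)
    {φ ψ : EuclideanSpace ℝ (Fin m) → EuclideanSpace ℝ (Fin N)} {ε r : ℝ} (hφ : ‖φ 0‖ ≤ ε)
    (hr : 0 ≤ r) (hψ : worstError A M₁ ψ ≤ ENNReal.ofReal r) :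
    ENNReal.ofReal (‖v‖ - r - ε) ≤ ⨆ y, ‖φ y - ψ y‖ₑ := by
  have hφv : ENNReal.ofReal (‖v‖ - ε) ≤ worstError A M₁ φ := by
    refine le_trans ?_ (ofReal_norm_sub_norm_le_worstError A hvM φ)
    rw [LinearMap.mem_ker.1 hv]
    gcongr
  calc ENNReal.ofReal (‖v‖ - r - ε) = ENNReal.ofReal (‖v‖ - ε) - ENNReal.ofReal r := by
        rw [sub_right_comm, ENNReal.ofReal_sub _ hr]
    _ ≤ worstError A M₁ φ - worstError A M₁ ψ := tsub_le_tsub hφv hψ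
    _ ≤ ⨆ y, ‖φ y - ψ y‖ₑ :=
      tsub_le_iff_right.2 (worstError_le_iSup_enorm_sub_add_worstError A M₁ φ ψ)

end WorstError

/-- if `‖φ 0‖ ≤ ε` then every `ψ` with worst-case error at most `‖v‖/2`
on `{0, v}` satisfies `sup_y ‖φ y - ψ y‖ ≥ ‖v‖/2 - ε`; in particular, if `‖v‖ = 3/4`
and `ε < 11/40` then this supremum exceeds `10⁻¹`. -/
theorem stmt_15 (m N : ℕ)
    (A : EuclideanSpace ℝ (Fin N) →ₗ[ℝ] EuclideanSpace ℝ (Fin m))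
    (v : EuclideanSpace ℝ (Fin N)) (hv : v ∈ LinearMap.ker A) (hv0 : v ≠ 0)
    (φ : EuclideanSpace ℝ (Fin m) → EuclideanSpace ℝ (Fin N)) (ε : ℝ)
    (hφ : ‖φ 0‖ ≤ ε) :
    ∀ ψ : EuclideanSpace ℝ (Fin m) → EuclideanSpace ℝ (Fin N),
      worstError A {0, v} ψ ≤ ENNReal.ofReal (‖v‖ / 2) →
      ENNReal.ofReal (‖v‖ / 2 - ε) ≤
        (⨆ y : EuclideanSpace ℝ (Fin m), (‖φ y - ψ y‖₊ : ℝ≥0∞)) ∧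
      (‖v‖ = 3 / 4 → ε < 11 / 40 →
        ENNReal.ofReal ((10 : ℝ)⁻¹) <
          ⨆ y : EuclideanSpace ℝ (Fin m), (‖φ y - ψ y‖₊ : ℝ≥0∞)) := by
  intro ψ hψ
  have h_le : ENNReal.ofReal (‖v‖ / 2 - ε) ≤ ⨆ y, ‖φ y - ψ y‖ₑ := by
    simpa only [sub_half] using
      stmt_15_general A hv (Set.mem_insert_of_mem 0 (Set.mem_singleton v)) hφ (by positivity) hψ
  refine ⟨h_le, fun hnorm hε ↦ lt_of_lt_of_le ?_ h_le⟩
  rw [ENNReal.ofReal_lt_ofReal_iff_of_nonneg (by norm_num), hnorm]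
  linarith
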